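/- Upper enhancement via cutsets, case p > p' (Proposition 3.1, item 2). Let (V, E, ends, α) be a finite graph with boundary condition, p ∈ (0,1), q > 0, and suppose p > p'. Let Ê ⊆ E be such that every e ∈ Ê admits a cutset included in E∖Ê. For e ∈ Ê set ε̂_e := (p−p') · P_{max(p,p')}({ω : ∃ χ ∈ Q_{E∖Ê}(e) with ω e' = false for every e' ∈ χ}), and set ε̂_e := 0 for e ∉ Ê. Then φ^α_{G,p,q} ≼ P_{(p−ε̂_e)_{e∈E}}. -/

import Mathlib

open scoped Classical

noncomputable section

namespace FKPaper

variable {V E : Type*}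

/-- One-step adjacency between wired vertices through an edge in `F`. -/
def Step (ends : E → Sym2 V) (α : Setoid V) (F : Set E) (x y : Quotient α) : Prop :=
  ∃ e ∈ F, Sym2.map (Quotient.mk α) (ends e) = s(x, y)

/-- Setoid of connected components of the wired multigraph with edge set `F`. -/
def connSetoid (ends : E → Sym2 V) (α : Setoid V) (F : Set E) : Setoid (Quotient α) :=
  Relation.EqvGen.setoid (Step ends α F)

/-- Connectivity in the wired multigraph with edge set `F`. -/
def Conn (ends : E → Sym2 V) (α : Setoid V) (F : Set E) (x y : Quotient α) : Prop :=
  (connSetoid ends α F).r x y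

/-- The two endpoints of `e` are joined in the wired multigraph with edge set `F`. -/
def EndsConn (ends : E → Sym2 V) (α : Setoid V) (F : Set E) (e : E) : Prop :=
  ∀ x y : V, ends e = s(x, y) → Conn ends α F (Quotient.mk α x) (Quotient.mk α y)

/-- Number of connected components `k(ω, α)`. -/
def numComponents (ends : E → Sym2 V) (α : Setoid V) (ω : E → Bool) : ℕ :=
  Nat.card (Quotient (connSetoid ends α {e | ω e = true}))

/-- `p' = p / (p + q (1 - p))`. -/
def pPrime (p q : ℝ) : ℝ := p / (p + q * (1 - p))

/-- Total mass of a set under a weight function. -/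
def massOf {ι : Type*} [Fintype ι] (w : ι → ℝ) (A : Set ι) : ℝ :=
  ∑ x ∈ Finset.univ.filter (· ∈ A), w x

/-- Normalized probability of a set under a weight function. -/
def probOf {ι : Type*} [Fintype ι] (w : ι → ℝ) (A : Set ι) : ℝ :=
  massOf w A / massOf w Set.univ

/-- FK weight of a configuration. -/
def fkWeight [Fintype E] (ends : E → Sym2 V) (α : Setoid V) (p q : ℝ) (ω : E → Bool) : ℝ :=
  p ^ (Finset.univ.filter fun e => ω e = true).card *
    (1 - p) ^ (Finset.univ.filter fun e => ω e = false).card *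
    q ^ numComponents ends α ω

/-- The FK (random cluster) probability measure `φ^α_{G,p,q}`. -/
def fkProb [Fintype E] (ends : E → Sym2 V) (α : Setoid V) (p q : ℝ)
    (A : Set (E → Bool)) : ℝ :=
  probOf (fkWeight ends α p q) A

/-- Inhomogeneous Bernoulli weight. -/
def berWeight [Fintype E] (pe : E → ℝ) (ω : E → Bool) : ℝ :=
  ∏ e, if ω e = true then pe e else 1 - pe e

/-- Inhomogeneous Bernoulli product measure `P_{(p_e)}`. -/
def berProb [Fintype E] (pe : E → ℝ) (A : Set (E → Bool)) : ℝ :=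
  probOf (berWeight pe) A

/-- Increasing sets of configurations. -/
def Increasing (A : Set (E → Bool)) : Prop :=
  ∀ ⦃ω ω' : E → Bool⦄, ω ∈ A → (∀ e, ω e ≤ ω' e) → ω' ∈ A

/-- Stochastic domination `μ ≼ ν`. -/
def StochDom [Fintype E] (μ ν : Set (E → Bool) → ℝ) : Prop :=
  ∀ A : Set (E → Bool), Increasing A → μ A ≤ ν A

/-- `Q_F(e)`: cutsets for `e` included in `F`. -/
def Cutsets (ends : E → Sym2 V) (α : Setoid V) (F : Set E) (e : E) : Set (Set E) :=
  {χ | χ ⊆ F ∧ ¬ EndsConn ends α {e' | e' ∉ χ ∧ e' ≠ e} e}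


-- HELPERS
/-- `f` depends only on coordinates in `S`. -/
def DepOn (S : Set E) (f : (E → Bool) → ℝ) : Prop :=
  ∀ ω ω' : E → Bool, (∀ e ∈ S, ω e = ω' e) → f ω = f ω'

/-- `f` is monotone. -/
def Incr (f : (E → Bool) → ℝ) : Prop :=
  ∀ ω ω' : E → Bool, (∀ e, ω e ≤ ω' e) → f ω ≤ f ω'

/-- Domination for functions depending only on `S`. -/
def DomOn [Fintype E] (w : (E → Bool) → ℝ) (pe : E → ℝ) (S : Set E) : Prop :=
  ∀ f : (E → Bool) → ℝ, Incr f → DepOn S f →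
    ∑ ω, w ω * f ω ≤ (∑ ω, w ω) * ∑ ω, berWeight pe ω * f ω

/-- The indicator of the edge being open. -/
def opn (e : E) (ω : E → Bool) : ℝ := if ω e = true then 1 else 0

lemma sum_pair [Fintype E] (e : E) (F : (E → Bool) → ℝ)
    (h : ∀ ω, F (Function.update ω e true) + F (Function.update ω e false) ≤ 0) :
    ∑ ω, F ω ≤ 0 := by
  have hinv : Function.Involutive (fun ω : E → Bool => Function.update ω e (!ω e)) := by
    intro ω
    funext x
    by_cases hx : x = e
    · subst hx; simp
    · simp [hx]
  have h1 : ∑ ω, F (Function.update ω e (!ω e)) = ∑ ω, F ω :=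
    Equiv.sum_comp (hinv.toPerm) F
  have h2 : ∑ ω, (F ω + F (Function.update ω e (!ω e))) ≤ 0 := by
    apply Finset.sum_nonpos
    intro ω _
    have := h ω
    cases hb : ω e
    · have h3 : Function.update ω e false = ω := by rw [← hb]; simp
      rw [h3] at this
      simp only [Bool.not_false]; linarith
    · have h3 : Function.update ω e true = ω := by rw [← hb]; simp
      rw [h3] at this
      simp only [Bool.not_true]; linarith
  rw [Finset.sum_add_distrib, h1] at h2
  linarith

lemma berWeight_sum [Fintype E] (pe : E → ℝ) : ∑ ω, berWeight pe ω = 1 := by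
  unfold berWeight
  rw [← Fintype.prod_sum (fun (e : E) (b : Bool) => if b = true then pe e else 1 - pe e)]
  simp

lemma berWeight_update [Fintype E] (pe : E → ℝ) (e : E) (ω : E → Bool) (b : Bool) :
    berWeight pe (Function.update ω e b) =
      (if b = true then pe e else 1 - pe e) *
        ∏ x ∈ Finset.univ.erase e, if ω x = true then pe x else 1 - pe x := by
  unfold berWeight
  rw [← Finset.mul_prod_erase Finset.univ _ (Finset.mem_univ e)]
  congr 1
  · simp
  · apply Finset.prod_congr rfl
    intro x hx
    rw [Function.update_of_ne (Finset.ne_of_mem_erase hx)]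

lemma DomOn.step [Fintype E] {w : (E → Bool) → ℝ} {pe : E → ℝ}
    (hpe : ∀ e, 0 ≤ pe e ∧ pe e ≤ 1) {S : Set E} {e : E} (hS : DomOn w pe S)
    (hc : ∀ h : (E → Bool) → ℝ, (∀ ω, 0 ≤ h ω) → DepOn S h →
      ∑ ω, w ω * h ω * (opn e ω - pe e) ≤ 0) :
    DomOn w pe (insert e S) := by
  intro f hf hd
  set f1 : (E → Bool) → ℝ := fun ω => f (Function.update ω e true) with hf1
  set f0 : (E → Bool) → ℝ := fun ω => f (Function.update ω e false) with hf0
  have hdb : ∀ b, DepOn S (fun ω => f (Function.update ω e b)) := by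
    intro b ω ω' h
    apply hd
    intro x hx
    by_cases hxe : x = e
    · subst hxe; simp
    · simp only [Function.update_of_ne hxe]
      exact h x (hx.resolve_left hxe)
  have hib : ∀ b, Incr (fun ω => f (Function.update ω e b)) := by
    intro b ω ω' h
    apply hf
    intro x
    by_cases hxe : x = e
    · subst hxe; simp
    · simp only [Function.update_of_ne hxe]
      exact h x
  have hle : ∀ ω, f0 ω ≤ f1 ω := by
    intro ω
    apply hf
    intro x
    by_cases hxe : x = e
    · subst hxe; simp
    · simp [Function.update_of_ne hxe]
  set T : (E → Bool) → ℝ := fun ω => pe e * f1 ω + (1 - pe e) * f0 ω with hT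
  have hTi : Incr T := by
    intro ω ω' h
    have a := hib true ω ω' h
    have b := hib false ω ω' h
    have := hpe e
    simp only [hT]
    exact add_le_add (mul_le_mul_of_nonneg_left a this.1)
      (mul_le_mul_of_nonneg_left b (by linarith))
  have hTd : DepOn S T := by
    intro ω ω' h
    have a := hdb true ω ω' h
    have b := hdb false ω ω' h
    simp only at a b
    simp only [hT, hf1, hf0, a, b]
  have key1 := hS T hTi hTd
  have key2 := hc (fun ω => f1 ω - f0 ω) (fun ω => sub_nonneg.2 (hle ω)) (by
    intro ω ω' h
    have a := hdb true ω ω' h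
    have b := hdb false ω ω' h
    simp only at a b
    simp only [hf1, hf0, a, b])
  have key3 : ∑ ω, w ω * f ω - ∑ ω, w ω * T ω =
      ∑ ω, w ω * (f1 ω - f0 ω) * (opn e ω - pe e) := by
    rw [← Finset.sum_sub_distrib]
    apply Finset.sum_congr rfl
    intro ω _
    cases hb : ω e
    · have h3 : f0 ω = f ω := by simp only [hf0]; rw [← hb]; simp
      simp only [opn, hb, hT, h3]; simp; ring
    · have h3 : f1 ω = f ω := by simp only [hf1]; rw [← hb]; simp
      simp only [opn, hb, hT, h3]; simp; ring
  have key4 : ∑ ω, berWeight pe ω * T ω = ∑ ω, berWeight pe ω * f ω := by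
    have a : ∀ ω, berWeight pe (Function.update ω e true) *
          (T (Function.update ω e true) - f (Function.update ω e true)) +
        berWeight pe (Function.update ω e false) *
          (T (Function.update ω e false) - f (Function.update ω e false)) = 0 := by
      intro ω
      simp only [hT, hf1, hf0, Function.update_idem, berWeight_update]
      simp; ring
    have b1 := sum_pair e (fun ω => berWeight pe ω * (T ω - f ω)) (fun ω => (a ω).le)
    have b2 := sum_pair e (fun ω => -(berWeight pe ω * (T ω - f ω)))
      (fun ω => by have := a ω; linarith)
    simp only [mul_sub, Finset.sum_sub_distrib, Finset.sum_neg_distrib] at b1 b2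
    linarith
  rw [key4] at key1
  linarith

lemma DomOn.empty [Fintype E] (w : (E → Bool) → ℝ) (pe : E → ℝ) : DomOn w pe ∅ := by
  intro f _ hd
  have : ∀ ω, f ω = f (fun _ => true) := fun ω => hd _ _ (by simp)
  simp only [this]
  rw [← Finset.sum_mul, ← Finset.sum_mul, berWeight_sum]
  simp

lemma conn_mono (ends : E → Sym2 V) (α : Setoid V) {F G : Set E} (h : F ⊆ G)
    {x y : Quotient α} (hc : Conn ends α F x y) : Conn ends α G x y := by
  refine Relation.EqvGen.mono (r := Step ends α F) ?_ _ _ hc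
  rintro a b ⟨e, he, h'⟩
  exact ⟨e, h he, h'⟩

lemma endsConn_mono (ends : E → Sym2 V) (α : Setoid V) {F G : Set E} (h : F ⊆ G) {e : E}
    (hc : EndsConn ends α F e) : EndsConn ends α G e :=
  fun x y hxy => conn_mono ends α h (hc x y hxy)

lemma surj_map (ends : E → Sym2 V) (α : Setoid V) {F G : Set E} (h : F ⊆ G) :
    ∃ φ : Quotient (connSetoid ends α F) → Quotient (connSetoid ends α G),
      (∀ x, φ (Quotient.mk _ x) = Quotient.mk _ x) ∧ Function.Surjective φ := by
  refine ⟨Quotient.map id (fun a b hab => conn_mono ends α h hab), fun x => rfl, ?_⟩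
  intro y
  induction y using Quotient.inductionOn with
  | _ y => exact ⟨Quotient.mk _ y, rfl⟩

lemma card_le [Fintype V] (ends : E → Sym2 V) (α : Setoid V) {F G : Set E} (h : F ⊆ G) :
    Nat.card (Quotient (connSetoid ends α G)) ≤ Nat.card (Quotient (connSetoid ends α F)) := by
  obtain ⟨φ, _, hs⟩ := surj_map ends α h
  exact Nat.card_le_card_of_surjective φ hs

lemma card_lt [Fintype V] (ends : E → Sym2 V) (α : Setoid V) {F G : Set E} (h : F ⊆ G)
    {e : E} (he : e ∈ G) (hn : ¬ EndsConn ends α F e) :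
    Nat.card (Quotient (connSetoid ends α G)) < Nat.card (Quotient (connSetoid ends α F)) := by
  obtain ⟨φ, h1, hs⟩ := surj_map ends α h
  refine lt_of_le_of_ne (Nat.card_le_card_of_surjective φ hs) ?_
  intro heq
  have hb : Function.Bijective φ := (Nat.bijective_iff_surjective_and_card φ).2 ⟨hs, heq.symm⟩
  apply hn
  intro x y hxy
  have : φ (Quotient.mk _ (Quotient.mk α x)) = φ (Quotient.mk _ (Quotient.mk α y)) := by
    rw [h1, h1]
    apply Quotient.sound
    exact Relation.EqvGen.rel _ _ ⟨e, he, by rw [hxy]; rfl⟩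
  exact Quotient.exact (hb.1 this)

lemma fkWeight_eq [Fintype E] (ends : E → Sym2 V) (α : Setoid V) (p q : ℝ) (ω : E → Bool) :
    fkWeight ends α p q ω = berWeight (fun _ => p) ω * q ^ numComponents ends α ω := by
  unfold fkWeight berWeight
  rw [Finset.prod_ite]
  simp

lemma fk_key [Fintype V] [Fintype E] (ends : E → Sym2 V) (α : Setoid V) (p q : ℝ)
    (hp : p ∈ Set.Ioo (0 : ℝ) 1) (hq : 1 ≤ q) (e : E) (D : Set (E → Bool))
    (hD : ∀ ω ω' : E → Bool, (∀ x, x ≠ e → ω x = ω' x) → ω ∈ D → ω' ∈ D)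
    (hDc : ∀ ω ∈ D, ¬ EndsConn ends α {x | ω x = true ∧ x ≠ e} e)
    (h : (E → Bool) → ℝ) (h0 : ∀ ω, 0 ≤ h ω) (hd : DepOn {e}ᶜ h) :
    ∑ ω, fkWeight ends α p q ω * h ω *
      (opn e ω - (p - (p - pPrime p q) * if ω ∈ D then 1 else 0)) ≤ 0 := by
  obtain ⟨hp0, hp1⟩ := hp
  apply sum_pair e
  intro ω
  have hag : ∀ b x, x ≠ e → ω x = Function.update ω e b x := by
    intro b x hx; simp [hx]
  have hag' : ∀ b x, x ≠ e → Function.update ω e b x = ω x := by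
    intro b x hx; simp [hx]
  have hDi : ∀ b, (Function.update ω e b ∈ D) = (ω ∈ D) := fun b =>
    propext ⟨hD _ _ (hag' b), hD _ _ (hag b)⟩
  have hhi : ∀ b, h (Function.update ω e b) = h ω := fun b => hd _ _ (hag' b)
  simp only [hDi, hhi, fkWeight_eq, berWeight_update, opn, Function.update_self]
  set R := ∏ x ∈ Finset.univ.erase e, if ω x = true then p else 1 - p with hR
  have hR0 : 0 ≤ R := Finset.prod_nonneg (fun x _ => by split_ifs <;> linarith)
  have hsub : {x | Function.update ω e false x = true} ⊆
      {x | Function.update ω e true x = true} := by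
    intro x hx
    by_cases hxe : x = e
    · subst hxe; simp
    · simpa [hxe] using hx
  have hle : numComponents ends α (Function.update ω e true) ≤
      numComponents ends α (Function.update ω e false) := card_le ends α hsub
  have hlt : ω ∈ D → numComponents ends α (Function.update ω e true) + 1 ≤
      numComponents ends α (Function.update ω e false) := by
    intro hω
    refine card_lt ends α hsub (e := e) (by simp) ?_
    intro hc
    apply hDc ω hω
    refine endsConn_mono ends α ?_ hc
    intro x hx
    by_cases hxe : x = e
    · subst hxe; simp at hx
    · exact ⟨by simpa [hxe] using hx, hxe⟩
  generalize numComponents ends α (Function.update ω e true) = k1 at *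
  generalize numComponents ends α (Function.update ω e false) = k0 at *
  have hden : 0 < p + q * (1 - p) := by nlinarith
  by_cases hω : ω ∈ D
  · have hq' : q ^ k1 * q ≤ q ^ k0 := by
      rw [← pow_succ]; exact pow_le_pow_right₀ hq (hlt hω)
    simp only [hω, if_true]
    have hpp : pPrime p q * (p + q * (1 - p)) = p := by
      unfold pPrime; field_simp
    have h1 : 1 - pPrime p q = pPrime p q * (q * (1-p)) / p := by
      field_simp; nlinarith
    have hpp0 : 0 ≤ pPrime p q := by unfold pPrime; positivity
    have hfin : p * R * q ^ k1 * h ω * (1 - (p - (p - pPrime p q) * 1)) +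
        (1 - p) * R * q ^ k0 * h ω * (0 - (p - (p - pPrime p q) * 1)) =
        - (R * h ω * (1 - p) * pPrime p q * (q ^ k0 - q ^ k1 * q)) := by
      have : (1 - (p - (p - pPrime p q) * 1)) = pPrime p q * (q * (1-p)) / p := by
        rw [← h1]; ring
      rw [this]; field_simp; ring
    have : 0 ≤ (R * h ω * (1 - p) * pPrime p q * (q ^ k0 - q ^ k1 * q)) :=
      mul_nonneg (mul_nonneg (mul_nonneg (mul_nonneg hR0 (h0 ω)) (by linarith)) hpp0)
        (by linarith)
    simp at hfin ⊢
    linarith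
  · have hq' : q ^ k1 ≤ q ^ k0 := pow_le_pow_right₀ hq hle
    simp only [hω, if_false]
    have : 0 ≤ R * h ω * (1 - p) * p * (q ^ k0 - q ^ k1) :=
      mul_nonneg (mul_nonneg (mul_nonneg (mul_nonneg hR0 (h0 ω)) (by linarith)) hp0.le)
        (by linarith)
    simp
    nlinarith

lemma massOf_eq {ι : Type*} [Fintype ι] (w : ι → ℝ) (A : Set ι) :
    massOf w A = ∑ x, w x * (if x ∈ A then 1 else 0) := by
  unfold massOf
  rw [Finset.sum_filter]
  simp

lemma massOf_univ {ι : Type*} [Fintype ι] (w : ι → ℝ) :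
    massOf w Set.univ = ∑ x, w x := by
  simp [massOf]

lemma berProb_eq [Fintype E] (pe : E → ℝ) (A : Set (E → Bool)) :
    berProb pe A = ∑ ω, berWeight pe ω * (if ω ∈ A then 1 else 0) := by
  rw [berProb, probOf, massOf_univ, berWeight_sum, massOf_eq, div_one]

lemma DomOn.of_steps [Fintype E] {w : (E → Bool) → ℝ} {pe : E → ℝ}
    (hpe : ∀ e, 0 ≤ pe e ∧ pe e ≤ 1) {S₀ : Set E} (h₀ : DomOn w pe S₀) (U : Set E)
    (hc : ∀ e ∈ U, ∀ S ⊆ U, e ∉ S → ∀ h : (E → Bool) → ℝ, (∀ ω, 0 ≤ h ω) → DepOn (S ∪ S₀) h →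
      ∑ ω, w ω * h ω * (opn e ω - pe e) ≤ 0) :
    DomOn w pe (U ∪ S₀) := by
  have : ∀ T : Finset E, (T : Set E) ⊆ U → DomOn w pe (T ∪ S₀) := by
    intro T
    induction T using Finset.induction_on with
    | empty => intro _; simpa using h₀
    | insert e T he ih =>
      intro hT
      rw [Finset.coe_insert] at hT ⊢
      rw [Set.insert_union]
      have hT' := (Set.insert_subset_iff.1 hT)
      exact DomOn.step hpe (ih hT'.2) (hc e hT'.1 T hT'.2 (by simpa using he))
  have h := this (Set.toFinite U).toFinset (by simp)
  simpa using h

lemma DepOn.mono {S T : Set E} (h : S ⊆ T) {f : (E → Bool) → ℝ} (hf : DepOn S f) : DepOn T f :=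
  fun ω ω' hh => hf ω ω' (fun e he => hh e (h he))

/-- **Proposition 3.1, item 2** (upper enhancement via cutsets, case `p > p'`). -/
theorem above_enhancement_of_gt_cutsets
    {V E : Type*} [Fintype V] [Fintype E]
    (ends : E → Sym2 V) (α : Setoid V)
    (p q : ℝ) (hp : p ∈ Set.Ioo (0 : ℝ) 1) (hq : 0 < q)
    (hpp' : pPrime p q < p)
    (Ehat : Set E)
    (hcut : ∀ e ∈ Ehat, ∃ χ : Set E, χ ∈ Cutsets ends α Ehatᶜ e)
    (εhat : E → ℝ)
    (hε : ∀ e, εhat e =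
      if e ∈ Ehat then
        (p - pPrime p q) *
          berProb (fun _ => max p (pPrime p q))
            {ω | ∃ χ ∈ Cutsets ends α Ehatᶜ e, ∀ e' ∈ χ, ω e' = false}
      else 0) :
    StochDom (fkProb ends α p q) (berProb fun e => p - εhat e) := by
  obtain ⟨hp0, hp1⟩ := hp
  have hden : 0 < p + q * (1 - p) := by
    have : 0 < q * (1 - p) := mul_pos hq (by linarith)
    linarith
  have hpp0 : 0 ≤ pPrime p q := by unfold pPrime; positivity
  have hq1 : 1 ≤ q := by
    by_contra hcon
    push Not at hcon
    have : p ≤ pPrime p q := by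
      unfold pPrime
      rw [le_div_iff₀ hden]
      have := mul_nonneg hp0.le (mul_nonneg (sub_nonneg.2 hcon.le) (sub_nonneg.2 hp1.le))
      nlinarith
    linarith
  rw [max_eq_left hpp'.le] at hε
  set w := fkWeight ends α p q with hw
  have hwpos : ∀ ω, 0 < w ω := by
    intro ω
    simp only [hw, fkWeight]
    have : 0 < 1 - p := by linarith
    positivity
  obtain ⟨D, hDdef⟩ : ∃ D : E → Set (E → Bool), D = fun e =>
    {ω | ∃ χ ∈ Cutsets ends α Ehatᶜ e, ∀ e' ∈ χ, ω e' = false} := ⟨_, rfl⟩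
  have hε' : ∀ e, εhat e = if e ∈ Ehat then
      (p - pPrime p q) * berProb (fun _ => p) (D e) else 0 := by
    rw [hDdef]; exact hε
  have hDdep : ∀ e (ω ω' : E → Bool), (∀ x ∈ Ehatᶜ, ω x = ω' x) → ω ∈ D e → ω' ∈ D e := by
    rw [hDdef]
    rintro e ω ω' h ⟨χ, hχ, hcl⟩
    exact ⟨χ, hχ, fun x hx => by rw [← h x (hχ.1 hx)]; exact hcl x hx⟩
  have hDdec : ∀ e (ω ω' : E → Bool), (∀ x, ω x ≤ ω' x) → ω' ∈ D e → ω ∈ D e := by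
    rw [hDdef]
    rintro e ω ω' h ⟨χ, hχ, hcl⟩
    refine ⟨χ, hχ, fun x hx => ?_⟩
    have := h x
    rw [hcl x hx] at this
    exact Bool.eq_false_of_le_false this
  have hDc : ∀ e, ∀ ω ∈ D e, ¬ EndsConn ends α {x | ω x = true ∧ x ≠ e} e := by
    rw [hDdef]
    rintro e ω ⟨χ, hχ, hcl⟩ hc
    apply hχ.2
    refine endsConn_mono ends α ?_ hc
    rintro x ⟨hx, hxe⟩
    refine ⟨fun hxχ => ?_, hxe⟩
    rw [hcl x hxχ] at hx
    simp at hx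
  have hplain : ∀ e, ∀ h : (E → Bool) → ℝ, (∀ ω, 0 ≤ h ω) → DepOn {e}ᶜ h →
      ∑ ω, w ω * h ω * (opn e ω - p) ≤ 0 := by
    intro e h h0 hd
    have := fk_key ends α p q ⟨hp0, hp1⟩ hq1 e ∅ (by simp) (by simp) h h0 hd
    simpa using this
  have hb01 : ∀ e, 0 ≤ berProb (fun _ => p) (D e) ∧ berProb (fun _ => p) (D e) ≤ 1 := by
    intro e
    have hb : ∀ ω : E → Bool, 0 ≤ berWeight (fun _ => p) ω := by
      intro ω
      unfold berWeight
      exact Finset.prod_nonneg (fun x _ => by split_ifs <;> linarith)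
    rw [berProb_eq]
    constructor
    · exact Finset.sum_nonneg (fun ω _ => mul_nonneg (hb ω) (by split_ifs <;> norm_num))
    · refine le_of_le_of_eq ?_ (berWeight_sum (fun _ : E => p))
      exact Finset.sum_le_sum (fun ω _ => mul_le_of_le_one_right (hb ω) (by split_ifs <;> norm_num))
  have hε01 : ∀ e, 0 ≤ εhat e ∧ εhat e ≤ p - pPrime p q := by
    intro e
    rw [hε']
    split_ifs
    · have := hb01 e
      exact ⟨mul_nonneg (by linarith) this.1, mul_le_of_le_one_right (by linarith) this.2⟩
    · constructor <;> linarith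
  have hpe : ∀ e, 0 ≤ p - εhat e ∧ p - εhat e ≤ 1 := by
    intro e
    have := hε01 e
    constructor <;> linarith
  -- edges of Ehat
  have hstep1 : ∀ e ∈ Ehat, ∀ S ⊆ Ehat, e ∉ S → ∀ h : (E → Bool) → ℝ, (∀ ω, 0 ≤ h ω) →
      DepOn S h → ∑ ω, w ω * h ω * (opn e ω - (p - εhat e)) ≤ 0 := by
    intro e he S hS heS h h0 hd
    have hde : DepOn {e}ᶜ h := hd.mono (by
      intro x hx hxe
      rw [Set.mem_singleton_iff] at hxe
      exact heS (hxe ▸ hx))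
    have k1 := fk_key ends α p q ⟨hp0, hp1⟩ hq1 e (D e)
      (fun ω ω' hh => hDdep e ω ω' (fun x hx => hh x (fun hxe => hx (hxe ▸ he))))
      (hDc e) h h0 hde
    have k2 : DomOn (fun ω => w ω * h ω) (fun _ => p) (Ehatᶜ ∪ ∅) := by
      apply DomOn.of_steps (fun _ => ⟨hp0.le, hp1.le⟩) (DomOn.empty _ _)
      intro e' he' S' hS' heS' h' h0' hd'
      have := hplain e' (fun ω => h ω * h' ω) (fun ω => mul_nonneg (h0 ω) (h0' ω)) (by
        intro ω ω' hh
        have a : h ω = h ω' := hd ω ω' (fun x hx => hh x (by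
          intro hxe
          rw [Set.mem_singleton_iff] at hxe
          exact he' (hS (hxe ▸ hx))))
        have b : h' ω = h' ω' := hd' ω ω' (fun x hx => hh x (by
          intro hxe
          rw [Set.mem_singleton_iff] at hxe
          rw [Set.union_empty] at hx
          exact heS' (hxe ▸ hx)))
        simp only [a, b])
      simpa only [mul_assoc] using this
    have k3 := k2 (fun ω => 1 - if ω ∈ D e then 1 else 0)
      (by
        intro ω ω' hh
        have := hDdec e ω ω' hh
        by_cases h1 : ω' ∈ D e
        · simp [h1, this h1]
        · simp only [h1, if_false]
          split_ifs <;> norm_num)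
      (by
        intro ω ω' hh
        rw [Set.union_empty] at hh
        have : ω ∈ D e ↔ ω' ∈ D e :=
          ⟨hDdep e ω ω' hh, hDdep e ω' ω (fun x hx => (hh x hx).symm)⟩
        simp only [this])
    simp only [mul_sub, mul_one, Finset.sum_sub_distrib, berWeight_sum] at k3
    rw [← berProb_eq] at k3
    have k4 : εhat e = (p - pPrime p q) * berProb (fun _ => p) (D e) := by
      rw [hε', if_pos he]
    have k5 : ∑ ω, fkWeight ends α p q ω * h ω *
          (opn e ω - (p - (p - pPrime p q) * if ω ∈ D e then 1 else 0)) =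
        ∑ ω, w ω * h ω * (opn e ω - p) +
          (p - pPrime p q) * ∑ ω, w ω * h ω * (if ω ∈ D e then 1 else 0) := by
      rw [Finset.mul_sum, ← Finset.sum_add_distrib]
      exact Finset.sum_congr rfl (fun ω _ => by ring)
    have k6 : ∑ ω, w ω * h ω * (opn e ω - (p - εhat e)) =
        ∑ ω, w ω * h ω * (opn e ω - p) + εhat e * ∑ ω, w ω * h ω := by
      rw [Finset.mul_sum, ← Finset.sum_add_distrib]
      exact Finset.sum_congr rfl (fun ω _ => by ring)
    rw [k5] at k1
    rw [k6, k4]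
    have k7 : (∑ ω, w ω * h ω) * berProb (fun _ => p) (D e) ≤
        ∑ ω, w ω * h ω * (if ω ∈ D e then 1 else 0) := by linarith
    have k8 := mul_le_mul_of_nonneg_left k7 (sub_nonneg.2 hpp'.le)
    linarith
  have hdom1 : DomOn w (fun e => p - εhat e) (Ehat ∪ ∅) := by
    apply DomOn.of_steps hpe (DomOn.empty _ _)
    intro e he S hS heS h h0 hd
    rw [Set.union_empty] at hd
    exact hstep1 e he S hS heS h h0 hd
  rw [Set.union_empty] at hdom1
  have hdom2 : DomOn w (fun e => p - εhat e) (Ehatᶜ ∪ Ehat) := by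
    apply DomOn.of_steps hpe hdom1
    intro e he S hS heS h h0 hd
    have : εhat e = 0 := by rw [hε', if_neg he]
    simp only [this, sub_zero]
    refine hplain e h h0 (hd.mono ?_)
    intro x hx hxe
    rw [Set.mem_singleton_iff] at hxe
    subst hxe
    exact hx.elim heS he
  intro A hA
  have hfin := hdom2 (fun ω => if ω ∈ A then 1 else 0)
    (by
      intro ω ω' hh
      by_cases h1 : ω ∈ A
      · simp [h1, hA h1 hh]
      · simp only [h1, if_false]
        split_ifs <;> norm_num)
    (by
      intro ω ω' hh
      have : ω = ω' := funext (fun x => hh x (by simp))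
      rw [this])
  rw [berProb_eq, fkProb, probOf, massOf_univ, massOf_eq]
  rw [div_le_iff₀ (Finset.sum_pos (fun ω _ => hwpos ω) Finset.univ_nonempty)]
  rw [mul_comm]
  exact hfin
end FKPaper
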